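/- Let φ : ℂ → ℂ^m be a map each of whose components is a polynomial of degree at most s, with φ(1) ≠ 0. Let f be a holomorphic map from the open unit disc D into ℂ^m, continuous on the closed unit disc, such that |f(ζ)| ≤ |φ(ζ)| for all ζ on the unit circle ∂D and f(ζ) = φ(ζ) + o(|ζ − 1|^{2s+1}) as ζ → 1 within D. Then f ≡ φ on D. -/

import Mathlib

open Metric Filter

/-- A polynomial of degree at most `s` agrees on the unit circle, after conjugation and
multiplication by `ζ ^ s`, with a polynomial. -/
lemma Polynomial.exists_eval_eq_pow_mul_conj (P : Polynomial ℂ) {s : ℕ} (hP : P.natDegree ≤ s) :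
    ∃ R : Polynomial ℂ, ∀ ζ ∈ sphere (0 : ℂ) 1,
      R.eval ζ = ζ ^ s * starRingEnd ℂ (P.eval ζ) := by
  refine ⟨∑ j ∈ Finset.range (s + 1),
    Polynomial.C (starRingEnd ℂ (P.coeff j)) * Polynomial.X ^ (s - j), fun ζ hζ => ?_⟩
  have hconj : ζ * starRingEnd ℂ ζ = 1 := by
    rw [Complex.mul_conj, Complex.normSq_eq_norm_sq, mem_sphere_zero_iff_norm.1 hζ]
    simp
  rw [Polynomial.eval_eq_sum_range' (Nat.lt_succ_of_le hP), Polynomial.eval_finsetSum, map_sum,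
    Finset.mul_sum]
  refine Finset.sum_congr rfl fun j hj => ?_
  have hj' : j ≤ s := Nat.lt_succ_iff.1 (Finset.mem_range.1 hj)
  have hpow : ζ ^ s * starRingEnd ℂ ζ ^ j = ζ ^ (s - j) := by
    rw [← Nat.sub_add_cancel hj', pow_add, mul_assoc, ← mul_pow, hconj]
    simp
  simp only [Polynomial.eval_mul, Polynomial.eval_C, Polynomial.eval_pow, Polynomial.eval_X,
    map_mul, map_pow]
  rw [← hpow]
  ring

/-- A vanishing rate at a boundary point of the disc extends from the disc to its closure. -/
lemma tendsto_norm_div_pow_closedBall {E : Type*} [NormedAddCommGroup E] {g : ℂ → E}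
    (hg : ContinuousOn g (closedBall 0 1)) {n : ℕ}
    (h : Tendsto (fun ζ => ‖g ζ‖ / ‖ζ - 1‖ ^ n) (nhdsWithin 1 (ball 0 1)) (nhds 0)) :
    Tendsto (fun ζ => ‖g ζ‖ / ‖ζ - 1‖ ^ n) (nhdsWithin 1 (closedBall 0 1)) (nhds 0) := by
  rw [Metric.tendsto_nhdsWithin_nhds] at h ⊢
  intro ε hε
  obtain ⟨δ, hδ, H⟩ := h (ε / 2) (half_pos hε)
  refine ⟨δ, hδ, fun {x} hx hxδ => ?_⟩
  have hcl : x ∈ closure (ball (1 : ℂ) δ ∩ ball 0 1) := by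
    apply isOpen_ball.inter_closure
    rw [closure_ball _ one_ne_zero]
    exact ⟨hxδ, hx⟩
  have hle : ‖g x‖ ≤ ε / 2 * ‖x - 1‖ ^ n := by
    refine ContinuousWithinAt.closure_le (f := fun ζ => ‖g ζ‖)
      (g := fun ζ => ε / 2 * ‖ζ - 1‖ ^ n) hcl
      ((hg x hx).norm.mono fun y hy => ball_subset_closedBall hy.2)
      (by fun_prop) fun y hy => ?_
    have hy1 : 0 < ‖y - 1‖ := by
      refine norm_pos_iff.2 (sub_ne_zero.2 ?_)
      rintro rfl
      simpa using hy.2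
    have := H hy.2 hy.1
    rw [Real.dist_eq, sub_zero, abs_of_nonneg (by positivity), div_lt_iff₀ (by positivity)] at this
    exact this.le
  rw [Real.dist_eq, sub_zero, abs_of_nonneg (by positivity)]
  exact (div_le_of_le_mul₀ (by positivity) (by positivity) hle).trans_lt (half_lt_self hε)

/-- **Boundary uniqueness of Hopf type.** A holomorphic function on the disc with nonnegative
real part on the circle and vanishing to order more than one at a boundary point has zero real
part. -/
lemma Complex.re_eq_zero_of_tendsto_norm_div {k : ℂ → ℂ} (hk : DiffContOnCl ℂ k (ball 0 1))
    (hre : ∀ ζ ∈ sphere (0 : ℂ) 1, 0 ≤ (k ζ).re)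
    (h : Tendsto (fun ζ => ‖k ζ‖ / ‖ζ - 1‖) (nhdsWithin 1 (ball 0 1)) (nhds 0)) :
    ∀ ζ ∈ closedBall (0 : ℂ) 1, (k ζ).re = 0 := by
  have hexp : DiffContOnCl ℂ (fun ζ => Complex.exp (-k ζ)) (ball 0 1) :=
    Complex.differentiable_exp.comp_diffContOnCl hk.neg
  have hnn : ∀ ζ ∈ closedBall (0 : ℂ) 1, 0 ≤ (k ζ).re := fun ζ hζ => by
    have := Complex.norm_le_of_forall_mem_frontier_norm_le isBounded_ball hexp (C := 1)
      (fun z hz => by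
        rw [frontier_ball _ one_ne_zero] at hz
        simpa [Complex.norm_exp] using hre z hz)
      (by rwa [closure_ball _ one_ne_zero] : ζ ∈ closure (ball (0 : ℂ) 1))
    simpa [Complex.norm_exp] using this
  have h0 : (k 0).re = 0 := by
    by_contra hne
    set a := k 0 with ha
    have hpos : 0 < a.re := lt_of_le_of_ne (hnn 0 (by simp)) (Ne.symm hne)
    have hden : ∀ z ∈ ball (0 : ℂ) 1, k z + starRingEnd ℂ a ≠ 0 := fun z hz hz0 => by
      have := congrArg Complex.re hz0
      simp only [Complex.add_re, Complex.conj_re, Complex.zero_re] at this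
      linarith [hnn z (ball_subset_closedBall hz)]
    have hschwarz : ∀ z ∈ ball (0 : ℂ) 1,
        ‖k z - a‖ ≤ ‖z‖ * ‖k z + starRingEnd ℂ a‖ := fun z hz => by
      have := Complex.norm_le_norm_of_mapsTo_ball (R := 1)
        (f := fun z => (k z - a) / (k z + starRingEnd ℂ a))
        ((hk.differentiableOn.sub_const _).div (hk.differentiableOn.add_const _) hden)
        (fun w hw => by
          have hw0 := hnn w (ball_subset_closedBall hw)
          rw [mem_closedBall_zero_iff, norm_div]
          refine div_le_one_of_le₀ ?_ (norm_nonneg _)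
          rw [← sq_le_sq₀ (norm_nonneg _) (norm_nonneg _), ← Complex.normSq_eq_norm_sq,
            ← Complex.normSq_eq_norm_sq, Complex.normSq_apply, Complex.normSq_apply]
          simp only [Complex.sub_re, Complex.sub_im, Complex.add_re, Complex.add_im,
            Complex.conj_re, Complex.conj_im]
          nlinarith [mul_nonneg hw0 hpos.le])
        (by simp [ha]) (mem_ball_zero_iff.1 hz)
      rwa [norm_div, div_le_iff₀ (norm_pos_iff.2 (hden z hz))] at this
    have hapos : 0 < ‖a‖ := norm_pos_iff.2 fun h => by simp [h] at hpos
    obtain ⟨δ, hδ, H⟩ := Metric.tendsto_nhdsWithin_nhds.1 h (‖a‖ / 2) (half_pos hapos)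
    set t := min (δ / 2) (1 / 2) with ht
    have ht0 : 0 < t := by positivity
    have ht1 : t ≤ 1 / 2 := min_le_right _ _
    have htδ : t < δ := (min_le_left _ _).trans_lt (half_lt_self hδ)
    have hnorm : ‖(1 - t : ℂ)‖ = 1 - t := by
      rw [← Complex.ofReal_one, ← Complex.ofReal_sub, Complex.norm_real, Real.norm_of_nonneg]
      linarith
    have hsub : ‖(1 - t : ℂ) - 1‖ = t := by
      simp [abs_of_pos ht0]
    have hmem : (1 - t : ℂ) ∈ ball (0 : ℂ) 1 := by
      rw [mem_ball_zero_iff, hnorm]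
      linarith
    have hk1 := H hmem (by rwa [dist_eq_norm, hsub])
    rw [Real.dist_eq, sub_zero, abs_of_nonneg (by positivity), hsub, div_lt_iff₀ ht0] at hk1
    have hs := hschwarz _ hmem
    rw [hnorm] at hs
    have h1 : ‖a‖ - ‖k (1 - t)‖ ≤ ‖k (1 - t) - a‖ := by
      rw [norm_sub_rev]
      exact norm_sub_norm_le _ _
    have h2 : ‖k (1 - t) + starRingEnd ℂ a‖ ≤ ‖k (1 - t)‖ + ‖a‖ :=
      (norm_add_le _ _).trans_eq (by rw [RCLike.norm_conj])
    nlinarith [mul_le_mul_of_nonneg_left h2 (by linarith : 0 ≤ 1 - t),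
      mul_nonneg ht0.le (norm_nonneg (k (1 - t)))]
  intro ζ hζ
  have := Complex.norm_eqOn_closedBall_of_isMaxOn hexp (fun z hz => by
    simpa [Complex.norm_exp, h0] using hnn z (ball_subset_closedBall hz)) hζ
  simpa [Complex.norm_exp, h0] using this

/-- **One-variable vector-valued rigidity.** Let `φ : ℂ → ℂ^m` have polynomial
components of degree at most `s`, with `φ(1) ≠ 0`. If `f` is holomorphic on the unit
disc with values in `ℂ^m`, continuous on the closed disc, satisfies `|f(ζ)| ≤ |φ(ζ)|`
on the unit circle and `f(ζ) = φ(ζ) + o(|ζ - 1|^(2s+1))` as `ζ → 1` within the disc,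
then `f ≡ φ` on the disc. -/
theorem rigidity_disc_vector_valued
    (m s : ℕ) (φ f : ℂ → EuclideanSpace ℂ (Fin m))
    (P : Fin m → Polynomial ℂ)
    (hdeg : ∀ i, (P i).natDegree ≤ s)
    (hφP : ∀ (ζ : ℂ) (i : Fin m), φ ζ i = (P i).eval ζ)
    (hφ1 : φ 1 ≠ 0)
    (hfd : DifferentiableOn ℂ f (ball (0 : ℂ) 1))
    (hfc : ContinuousOn f (closedBall (0 : ℂ) 1))
    (hle : ∀ ζ ∈ sphere (0 : ℂ) 1, ‖f ζ‖ ≤ ‖φ ζ‖)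
    (ho : Tendsto (fun ζ => ‖f ζ - φ ζ‖ / ‖ζ - 1‖ ^ (2 * s + 1))
      (nhdsWithin (1 : ℂ) (ball (0 : ℂ) 1)) (nhds 0)) :
    Set.EqOn f φ (ball (0 : ℂ) 1) := by
  have hφ : Differentiable ℂ φ := by
    rw [differentiable_euclidean]
    intro i
    simpa only [hφP] using (P i).differentiable
  have hgc : ContinuousOn (fun ζ => f ζ - φ ζ) (closedBall 0 1) :=
    hfc.sub hφ.continuous.continuousOn
  replace ho := tendsto_norm_div_pow_closedBall hgc ho
  have hone : f 1 = φ 1 := by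
    have hlim : Tendsto (fun ζ => ‖f ζ - φ ζ‖ / ‖ζ - 1‖ ^ (2 * s + 1) * ‖ζ - 1‖ ^ (2 * s + 1))
        (nhdsWithin (1 : ℂ) (ball 0 1)) (nhds (0 * ‖(1 : ℂ) - 1‖ ^ (2 * s + 1))) :=
      (ho.mono_left (nhdsWithin_mono _ ball_subset_closedBall)).mul
        ((by fun_prop : Continuous fun ζ : ℂ => ‖ζ - 1‖ ^ (2 * s + 1)).tendsto 1 |>.mono_left
          nhdsWithin_le_nhds)
    have hlim' : Tendsto (fun ζ => ‖f ζ - φ ζ‖) (nhdsWithin (1 : ℂ) (ball 0 1))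
        (nhds ‖f 1 - φ 1‖) :=
      ((hgc 1 (by simp)).mono ball_subset_closedBall).norm
    have : (nhdsWithin (1 : ℂ) (ball 0 1)).NeBot := by
      rw [← mem_closure_iff_nhdsWithin_neBot, closure_ball _ one_ne_zero]
      simp
    have heq := tendsto_nhds_unique (hlim.congr' ?_) hlim'
    · rw [zero_mul] at heq
      exact sub_eq_zero.1 (norm_eq_zero.1 heq.symm)
    · filter_upwards [self_mem_nhdsWithin] with z hz
      have hz1 : ‖z - 1‖ ≠ 0 := by
        refine norm_ne_zero_iff.2 (sub_ne_zero.2 ?_)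
        rintro rfl
        simp at hz
      field_simp
  choose R hR using fun i => (P i).exists_eval_eq_pow_mul_conj (hdeg i)
  set d : ℂ → ℂ := fun ζ => ∑ i, (φ ζ i - f ζ i) * (R i).eval ζ with hd
  set k : ℂ → ℂ := fun ζ => (-1) ^ s * d ζ / (ζ - 1) ^ (2 * s) with hkdef
  have hk1 : k 1 = 0 := by simp [hkdef, hd, hone]
  have hfi : ∀ i, ContinuousOn (fun ζ => f ζ i) (closedBall 0 1) := fun i =>
    (EuclideanSpace.proj (𝕜 := ℂ) i).continuous.comp_continuousOn hfc
  have hφi : ∀ i, Continuous (fun ζ => φ ζ i) := fun i =>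
    (EuclideanSpace.proj (𝕜 := ℂ) i).continuous.comp hφ.continuous
  have hdc : ContinuousOn d (closedBall 0 1) :=
    continuousOn_finsetSum _ fun i _ =>
      ((hφi i).continuousOn.sub (hfi i)).mul (R i).continuous.continuousOn
  have hdd : DifferentiableOn ℂ d (ball 0 1) := by
    refine DifferentiableOn.fun_sum fun i _ => DifferentiableOn.mul (DifferentiableOn.sub ?_ ?_)
      (R i).differentiable.differentiableOn
    · exact (differentiable_euclidean.1 hφ i).differentiableOn
    · exact differentiableOn_euclidean.1 hfd i
  have hlim : Tendsto (fun ζ => ‖k ζ‖ / ‖ζ - 1‖) (nhdsWithin 1 (closedBall 0 1)) (nhds 0) := by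
    have hbound : Tendsto (fun ζ => ‖f ζ - φ ζ‖ / ‖ζ - 1‖ ^ (2 * s + 1) * ∑ i, ‖(R i).eval ζ‖)
        (nhdsWithin 1 (closedBall 0 1)) (nhds (0 * ∑ i, ‖(R i).eval 1‖)) :=
      ho.mul ((continuous_finsetSum _ fun i _ => (R i).continuous.norm).tendsto 1 |>.mono_left
        nhdsWithin_le_nhds)
    rw [zero_mul] at hbound
    refine squeeze_zero (fun ζ => by positivity) (fun ζ => ?_) hbound
    have hdle : ‖d ζ‖ ≤ ‖f ζ - φ ζ‖ * ∑ i, ‖(R i).eval ζ‖ := by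
      rw [Finset.mul_sum]
      refine norm_sum_le_of_le _ fun i _ => ?_
      rw [norm_mul, norm_sub_rev]
      exact mul_le_mul_of_nonneg_right (PiLp.norm_apply_le (f ζ - φ ζ) i) (norm_nonneg _)
    have hknorm : ‖k ζ‖ / ‖ζ - 1‖ = ‖d ζ‖ / ‖ζ - 1‖ ^ (2 * s + 1) := by
      simp [hkdef, div_div, pow_succ]
    rw [hknorm, div_mul_eq_mul_div]
    gcongr
  have hkc : ContinuousOn k (closedBall 0 1) := by
    intro ζ hζ
    by_cases h1 : ζ = 1
    · subst h1
      have hmul : Tendsto (fun ζ => ‖k ζ‖ / ‖ζ - 1‖ * ‖ζ - 1‖) (nhdsWithin 1 (closedBall 0 1))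
          (nhds (0 * ‖(1 : ℂ) - 1‖)) :=
        hlim.mul ((by fun_prop : Continuous fun ζ : ℂ => ‖ζ - 1‖).tendsto 1 |>.mono_left
          nhdsWithin_le_nhds)
      rw [zero_mul] at hmul
      rw [ContinuousWithinAt, hk1, tendsto_zero_iff_norm_tendsto_zero]
      refine hmul.congr fun z => div_mul_cancel_of_imp fun hz => ?_
      rw [sub_eq_zero.1 (norm_eq_zero.1 hz), hk1, norm_zero]
    · exact (continuousWithinAt_const.mul (hdc ζ hζ)).div (by fun_prop)
        (pow_ne_zero _ (sub_ne_zero.2 h1))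
  have hk : DiffContOnCl ℂ k (ball 0 1) := by
    refine ⟨(hdd.const_mul _).div (by fun_prop) fun ζ hζ => ?_, ?_⟩
    · refine pow_ne_zero _ (sub_ne_zero.2 ?_)
      rintro rfl
      simp at hζ
    · rwa [closure_ball _ one_ne_zero]
  have hpolar : ∀ ζ ∈ sphere (0 : ℂ) 1,
      ‖f ζ - φ ζ‖ ^ 2 ≤ 2 * (inner ℂ (φ ζ) (φ ζ - f ζ)).re := fun ζ hζ => by
    have hsq := pow_le_pow_left₀ (norm_nonneg _) (hle ζ hζ) 2
    have hexpand := norm_sub_sq (𝕜 := ℂ) (φ ζ) (φ ζ - f ζ)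
    rw [sub_sub_cancel, RCLike.re_eq_complex_re] at hexpand
    rw [norm_sub_rev]
    linarith
  have hkinner : ∀ ζ ∈ sphere (0 : ℂ) 1, ζ ≠ 1 →
      k ζ = inner ℂ (φ ζ) (φ ζ - f ζ) / ((‖ζ - 1‖ ^ 2) ^ s : ℝ) := fun ζ hζ h1 => by
    have hζ0 : ζ ≠ 0 := ne_zero_of_mem_unit_sphere ⟨ζ, hζ⟩
    have hconj : ζ * starRingEnd ℂ ζ = 1 := by
      rw [Complex.mul_conj, Complex.normSq_eq_norm_sq, mem_sphere_zero_iff_norm.1 hζ]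
      simp
    have hnormSq : -(ζ - 1) ^ 2 = ζ * ((‖ζ - 1‖ ^ 2 : ℝ) : ℂ) := by
      rw [← Complex.normSq_eq_norm_sq, ← Complex.mul_conj, map_sub, map_one]
      linear_combination (1 - ζ) * hconj
    have hdinner : d ζ = ζ ^ s * inner ℂ (φ ζ) (φ ζ - f ζ) := by
      rw [PiLp.inner_apply, Finset.mul_sum]
      refine Finset.sum_congr rfl fun i _ => ?_
      rw [hR i ζ hζ, ← hφP, RCLike.inner_apply, PiLp.sub_apply]
      ring
    have hpow : (ζ - 1) ^ (2 * s) = (-1) ^ s * (ζ ^ s * (((‖ζ - 1‖ ^ 2) ^ s : ℝ) : ℂ)) := by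
      rw [Complex.ofReal_pow, ← mul_pow, ← hnormSq, ← mul_pow, pow_mul]
      ring
    simp only [hkdef]
    rw [hpow, hdinner, mul_div_mul_left _ _ (pow_ne_zero _ (by norm_num)),
      mul_div_mul_left _ _ (pow_ne_zero _ hζ0)]
  have hkre : ∀ ζ ∈ sphere (0 : ℂ) 1, 0 ≤ (k ζ).re := fun ζ hζ => by
    by_cases h1 : ζ = 1
    · simp [h1, hk1]
    · rw [hkinner ζ hζ h1, Complex.div_ofReal_re]
      have := hpolar ζ hζ
      have : 0 ≤ (inner ℂ (φ ζ) (φ ζ - f ζ)).re := by nlinarith [sq_nonneg ‖f ζ - φ ζ‖]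
      positivity
  have hkzero := Complex.re_eq_zero_of_tendsto_norm_div hk hkre
    (hlim.mono_left (nhdsWithin_mono _ ball_subset_closedBall))
  refine Complex.eqOn_of_eqOn_frontier isBounded_ball
    ⟨hfd, by rwa [closure_ball _ one_ne_zero]⟩ hφ.diffContOnCl ?_
  rw [frontier_ball _ one_ne_zero]
  intro ζ hζ
  by_cases h1 : ζ = 1
  · rw [h1, hone]
  · have hz := hkzero ζ (sphere_subset_closedBall hζ)
    have hpos : 0 < (‖ζ - 1‖ ^ 2) ^ s := by
      have := norm_pos_iff.2 (sub_ne_zero.2 h1)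
      positivity
    rw [hkinner ζ hζ h1, Complex.div_ofReal_re, div_eq_zero_iff, or_iff_left hpos.ne'] at hz
    have hp := hpolar ζ hζ
    rw [hz, mul_zero] at hp
    exact sub_eq_zero.1 (norm_eq_zero.1 (pow_eq_zero_iff two_ne_zero |>.1
      (le_antisymm hp (sq_nonneg _))))
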